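/- Let Δ ∪ {α} be a set of propositional formulas. If Δ ⊢_c α (α is derivable from Δ in the classical propositional Hilbert calculus whose axioms are all tautologies and whose only rule is modus ponens), then Δ* ⊢ α* in the PPL calculus, where β* denotes the PPL formula ⟦β⟧ = 1 and Δ* = {δ* : δ ∈ Δ}. -/

import Mathlib

open MeasureTheory

/-- Propositional formulas over atoms `B_j`, `j : ℕ`, with `¬` and `→`. -/
inductive PropForm : Type
  | atom : ℕ → PropForm
  | neg : PropForm → PropForm
  | imp : PropForm → PropForm → PropForm
  deriving DecidableEq

namespace PropForm

def conj (α β : PropForm) : PropForm := neg (imp α (neg β))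
def disj (α β : PropForm) : PropForm := imp (neg α) β
def biimp (α β : PropForm) : PropForm := conj (imp α β) (imp β α)
def top : PropForm := imp (atom 0) (atom 0)
def bot : PropForm := neg top

/-- Satisfaction of a formula by a valuation `v : ℕ → Bool` (a subset of ℕ). -/
def sat (v : ℕ → Bool) : PropForm → Prop
  | atom j => v j = true
  | neg α => ¬ sat v α
  | imp α β => sat v α → sat v β

/-- The finite set `B_α` of indices of atoms occurring in `α`. -/
def atoms : PropForm → Finset ℕ
  | atom j => {j}
  | neg α => atoms α
  | imp α β => atoms α ∪ atoms β

end PropForm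

/-- `⊨ α`: every valuation satisfies `α`. -/
def Valid (α : PropForm) : Prop := ∀ v, PropForm.sat v α

/-- `α ⊨ β`. -/
def Entails (α β : PropForm) : Prop := ∀ v, PropForm.sat v α → PropForm.sat v β

/-- `Δ ⊨ α`. -/
def SetEntails (Δ : Set PropForm) (α : PropForm) : Prop :=
  ∀ v, (∀ δ ∈ Δ, PropForm.sat v δ) → PropForm.sat v α

/-- Conjunction of a list of formulas (empty conjunction is `⊤`). -/
def bigConj (l : List PropForm) : PropForm := l.foldr PropForm.conj PropForm.top

/-- Disjunction of a list of formulas (empty disjunction is `⊥`). -/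
def bigDisj (l : List PropForm) : PropForm := l.foldr PropForm.disj PropForm.bot

/-- `φ_A^U = (⋀_{j∈U} B_j) ∧ (⋀_{j∈A∖U} ¬B_j)`. -/
def phi (A U : Finset ℕ) : PropForm :=
  PropForm.conj (bigConj ((U.sort (· ≤ ·)).map PropForm.atom))
    (bigConj (((A \ U).sort (· ≤ ·)).map (fun j => PropForm.neg (PropForm.atom j))))

/-- The space of valuations, `2^ℕ` identified with `{0,1}^ℕ`, with the product σ-algebra. -/
abbrev Val := ℕ → Bool

/-- `v ∩ A` for a valuation `v` and a finite `A ⊆ ℕ`. -/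
def restrict (v : Val) (A : Finset ℕ) : Finset ℕ := A.filter (fun j => v j = true)

/-- `Prob_μ(α) = μ{v : v ⊨ α}`. -/
noncomputable def Prob (μ : Measure Val) (α : PropForm) : ℝ :=
  (μ {v | PropForm.sat v α}).toReal

/-! ## PPL: probabilistic propositional logic -/

/-- RCOF variables: `x_k` for `k ∈ ℕ` and `x_α` for propositional formulas `α`. -/
inductive RVar : Type
  | num : ℕ → RVar
  | fm : PropForm → RVar
  deriving DecidableEq

/-- RCOF terms: built from 0, 1, variables, unary `-`, binary `+` and `×`. -/
inductive RTerm : Type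
  | zero : RTerm
  | one : RTerm
  | var : RVar → RTerm
  | neg : RTerm → RTerm
  | add : RTerm → RTerm → RTerm
  | mul : RTerm → RTerm → RTerm
  deriving DecidableEq

/-- Value of a term in `ℝ` under an assignment. -/
def RTerm.eval (ρ : RVar → ℝ) : RTerm → ℝ
  | zero => 0
  | one => 1
  | var x => ρ x
  | neg t => - t.eval ρ
  | add t s => t.eval ρ + s.eval ρ
  | mul t s => t.eval ρ * s.eval ρ

/-- PPL formulas: atoms `⟦α⟧ = t` and `⟦α⟧ < t`, closed under implication. -/
inductive PPLForm : Type
  | eq : PropForm → RTerm → PPLForm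
  | lt : PropForm → RTerm → PPLForm
  | imp : PPLForm → PPLForm → PPLForm
  deriving DecidableEq

/-- `⊥` in PPL: `⟦⊤⟧ < 1`. -/
def pbot : PPLForm := PPLForm.lt PropForm.top RTerm.one

/-- `¬φ` in PPL: `φ → (⟦⊤⟧ < 1)`. -/
def pneg (φ : PPLForm) : PPLForm := PPLForm.imp φ pbot

/-- `φ ∧ ψ` in PPL. -/
def pconj (φ ψ : PPLForm) : PPLForm := pneg (PPLForm.imp φ (pneg ψ))

/-- `φ ∨ ψ` in PPL. -/
def pdisj (φ ψ : PPLForm) : PPLForm := PPLForm.imp (pneg φ) ψ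

/-- `φ ↔ ψ` in PPL. -/
def piff (φ ψ : PPLForm) : PPLForm := pconj (PPLForm.imp φ ψ) (PPLForm.imp ψ φ)

/-- Conjunction of a nonempty list of PPL formulas (empty list gives `⟦⊤⟧ = 1`). -/
def pBigConj : List PPLForm → PPLForm
  | [] => PPLForm.eq PropForm.top RTerm.one
  | [φ] => φ
  | φ :: l => pconj φ (pBigConj l)

/-- Disjunction of a nonempty list of PPL formulas (empty list gives `⊥`). -/
def pBigDisj : List PPLForm → PPLForm
  | [] => pbot
  | [φ] => φ
  | φ :: l => pdisj φ (pBigDisj l)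

/-- Satisfaction of a PPL formula by a stochastic valuation `μ` and an assignment `ρ`. -/
def PPLForm.sat (μ : MeasureTheory.Measure Val) (ρ : RVar → ℝ) : PPLForm → Prop
  | eq α t => Prob μ α = t.eval ρ
  | lt α t => Prob μ α < t.eval ρ
  | imp φ ψ => φ.sat μ ρ → ψ.sat μ ρ

/-- `Γ ⊨ φ` in PPL. -/
def PPLentails (Γ : Set PPLForm) (φ : PPLForm) : Prop :=
  ∀ μ : MeasureTheory.Measure Val, MeasureTheory.IsProbabilityMeasure μ →
    ∀ ρ : RVar → ℝ, (∀ γ ∈ Γ, PPLForm.sat μ ρ γ) → PPLForm.sat μ ρ φ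

/-- Boolean evaluation of a PPL formula given truth values for its atomic subformulas. -/
def PPLForm.evalAtoms (w : PPLForm → Bool) : PPLForm → Bool
  | imp φ ψ => !(φ.evalAtoms w) || ψ.evalAtoms w
  | φ => w φ

/-- Tautological PPL formulas: true under every assignment of truth values to atomic
PPL formulas; these are exactly the PPL-substitution-instances of classical tautologies. -/
def PPLTaut (φ : PPLForm) : Prop := ∀ w : PPLForm → Bool, φ.evalAtoms w = true

/-- Literals of classical propositional logic. -/
def IsLiteral (α : PropForm) : Prop :=
  (∃ j, α = PropForm.atom j) ∨ (∃ j, α = PropForm.neg (PropForm.atom j))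

/-- Conjunctions of literals. -/
inductive IsLitConj : PropForm → Prop
  | lit {α} : IsLiteral α → IsLitConj α
  | conj {α β} : IsLitConj α → IsLitConj β → IsLitConj (PropForm.conj α β)

/-- `B_Λ`, the union of the atom sets of the formulas `α j`. -/
def BigB {k : ℕ} (α : Fin k → PropForm) : Finset ℕ :=
  Finset.univ.sup fun j => (α j).atoms

/-- `Λ = {c j ℓ}` is an adequate set of DNF-conjuncts for `{α j}`. -/
structure AdequateDNF {k : ℕ} (α : Fin k → PropForm) (m : Fin k → ℕ)
    (c : (j : Fin k) → Fin (m j) → PropForm) : Prop where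
  atoms_eq : ∀ j ℓ, (c j ℓ).atoms = BigB α
  litconj : ∀ j ℓ, IsLitConj (c j ℓ)
  pairwise_incons : ∀ j, ∀ ℓ ℓ' : Fin (m j), ℓ ≠ ℓ' →
      Valid (PropForm.neg (PropForm.conj (c j ℓ) (c j ℓ')))
  equiv : ∀ j, Valid (PropForm.biimp (α j) (bigDisj (List.ofFn (c j))))

/-- The RCOF formula `Q^{α_1,…,α_k}_Λ` holding in `ℝ` under the assignment `ρ`. -/
def Qcond {k : ℕ} (α : Fin k → PropForm) (m : Fin k → ℕ)
    (c : (j : Fin k) → Fin (m j) → PropForm) (ρ : RVar → ℝ) : Prop :=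
  (∀ U ∈ (BigB α).powerset,
      0 ≤ ρ (RVar.fm (phi (BigB α) U)) ∧ ρ (RVar.fm (phi (BigB α) U)) ≤ 1) ∧
  (∑ U ∈ (BigB α).powerset, ρ (RVar.fm (phi (BigB α) U))) = 1 ∧
  (∀ j, ρ (RVar.fm (α j)) = ∑ ℓ : Fin (m j), ρ (RVar.fm (c j ℓ)))

/-- `x ∘ y` where `∘` is `=` if `b` and `<` otherwise. -/
def rcmp (b : Bool) (x y : ℝ) : Prop := if b then x = y else x < y

/-- The PPL atom `⟦α⟧ ∘ t` where `∘` is `=` if `b` and `<` otherwise. -/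
def patom (b : Bool) (α : PropForm) (t : RTerm) : PPLForm :=
  if b then PPLForm.eq α t else PPLForm.lt α t

/-- Side condition of the RR axioms: there is an adequate set of DNF-conjuncts for
`{α_1,…,α_{k+1}}` such that the universal closure of
`(Q ∧ ⋀_{j≤k} x_{α_j} ∘_j t_j) → x_{α_{k+1}} ∘_{k+1} t_{k+1}` holds in `ℝ`. -/
def RRside {k : ℕ} (α : Fin (k + 1) → PropForm) (isEq : Fin (k + 1) → Bool)
    (t : Fin (k + 1) → RTerm) : Prop :=
  ∃ (m : Fin (k + 1) → ℕ) (c : (j : Fin (k + 1)) → Fin (m j) → PropForm),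
    AdequateDNF α m c ∧
    ∀ ρ : RVar → ℝ, Qcond α m c ρ →
      (∀ j : Fin k, rcmp (isEq j.castSucc) (ρ (RVar.fm (α j.castSucc)))
          ((t j.castSucc).eval ρ)) →
      rcmp (isEq (Fin.last k)) (ρ (RVar.fm (α (Fin.last k)))) ((t (Fin.last k)).eval ρ)

/-- The RR axiom `(⟦α_1⟧ ∘_1 t_1 ∧ … ∧ ⟦α_k⟧ ∘_k t_k) → ⟦α_{k+1}⟧ ∘_{k+1} t_{k+1}`
(for `k = 0` it is just the conclusion). -/
def rrFormula {k : ℕ} (α : Fin (k + 1) → PropForm) (isEq : Fin (k + 1) → Bool)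
    (t : Fin (k + 1) → RTerm) : PPLForm :=
  match k with
  | 0 => patom (isEq (Fin.last 0)) (α (Fin.last 0)) (t (Fin.last 0))
  | k + 1 => PPLForm.imp
      (pBigConj (List.ofFn fun j : Fin (k + 1) =>
        patom (isEq j.castSucc) (α j.castSucc) (t j.castSucc)))
      (patom (isEq (Fin.last (k + 1))) (α (Fin.last (k + 1))) (t (Fin.last (k + 1))))

/-- The PPL calculus: hypotheses, TAUT, RR and modus ponens. -/
inductive PPLderiv (Γ : Set PPLForm) : PPLForm → Prop
  | hyp {φ} : φ ∈ Γ → PPLderiv Γ φ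
  | taut {φ} : PPLTaut φ → PPLderiv Γ φ
  | rr {k : ℕ} (α : Fin (k + 1) → PropForm) (isEq : Fin (k + 1) → Bool)
      (t : Fin (k + 1) → RTerm) :
      RRside α isEq t → PPLderiv Γ (rrFormula α isEq t)
  | mp {φ ψ} : PPLderiv Γ (PPLForm.imp φ ψ) → PPLderiv Γ φ → PPLderiv Γ ψ

/-- The classical propositional Hilbert calculus whose axioms are all tautologies and
whose only rule is modus ponens. -/
inductive CPLderiv (Δ : Set PropForm) : PropForm → Prop
  | hyp {α} : α ∈ Δ → CPLderiv Δ α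
  | taut {α} : Valid α → CPLderiv Δ α
  | mp {α β} : CPLderiv Δ (PropForm.imp α β) → CPLderiv Δ α → CPLderiv Δ β

/-- The translation `β* = (⟦β⟧ = 1)` of classical formulas into PPL. -/
def star (β : PropForm) : PPLForm := PPLForm.eq β RTerm.one

/-!
A probability atom that follows semantically from derivable probability atoms is derivable, and this
is all the theorem needs: `⟦α⟧ = 1` says that `α` holds almost surely, so tautologies and modus
ponens are sound for almost sure truth.

To derive a semantic consequence by an RR axiom, a solution `ρ` of `Q` has to be realised by a
stochastic valuation. The natural candidate gives the valuation `U ⊆ A` the weight `x_{φ_A^U}`, but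
`Q` relates these weights to the `x_{α_j}` only if the formulas `φ_A^U` occur among the `α_j`. So
the derivable premises `⟦φ_A^U⟧ = x_{φ_A^U}` are added to the RR axiom first.
-/

/-- The valuation identified with the finite set `U` of atoms it makes true. -/
def valOf (U : Finset ℕ) : Val := fun j => decide (j ∈ U)

theorem eq_valOf_iff {b : Bool} {U : Finset ℕ} {j : ℕ} : b = valOf U j ↔ (b = true ↔ j ∈ U) := by
  cases b <;> simp [valOf]

theorem restrict_subset (v : Val) (A : Finset ℕ) : restrict v A ⊆ A :=
  Finset.filter_subset _ _

theorem restrict_eq_iff {A U : Finset ℕ} (hU : U ⊆ A) (v : Val) :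
    restrict v A = U ↔ ∀ j ∈ A, v j = valOf U j := by
  simp only [eq_valOf_iff, restrict, Finset.ext_iff, Finset.mem_filter]
  exact ⟨fun h j hj => by simp [← h j, hj],
    fun h j => ⟨fun hj => (h j hj.1).1 hj.2, fun hj => ⟨hU hj, (h j (hU hj)).2 hj⟩⟩⟩

theorem restrict_valOf {A U : Finset ℕ} (hU : U ⊆ A) : restrict (valOf U) A = U :=
  (restrict_eq_iff hU _).2 fun _ _ => rfl

theorem valOf_restrict {A : Finset ℕ} {j : ℕ} (hj : j ∈ A) (v : Val) :
    valOf (restrict v A) j = v j :=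
  ((restrict_eq_iff (restrict_subset v A) v).1 rfl j hj).symm

namespace PropForm

variable {v w : Val} {α β : PropForm}

instance decidableSat (v : Val) : DecidablePred (sat v)
  | atom j => inferInstanceAs (Decidable (v j = true))
  | neg α =>
    haveI := decidableSat v α
    inferInstanceAs (Decidable (¬ sat v α))
  | imp α β =>
    haveI := decidableSat v α
    haveI := decidableSat v β
    inferInstanceAs (Decidable (sat v α → sat v β))

@[simp] theorem sat_atom {j : ℕ} : sat v (atom j) ↔ v j = true := Iff.rfl

@[simp] theorem sat_neg : sat v (neg α) ↔ ¬ sat v α := Iff.rfl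

@[simp] theorem sat_imp : sat v (imp α β) ↔ (sat v α → sat v β) := Iff.rfl

@[simp] theorem sat_conj : sat v (conj α β) ↔ sat v α ∧ sat v β := by
  simp [conj]

@[simp] theorem sat_disj : sat v (disj α β) ↔ sat v α ∨ sat v β := by
  simp [disj, or_iff_not_imp_left]

@[simp] theorem sat_biimp : sat v (biimp α β) ↔ (sat v α ↔ sat v β) := by
  simp [biimp, iff_iff_implies_and_implies]

@[simp] theorem sat_top : sat v top := id

@[simp] theorem not_sat_bot : ¬ sat v bot := not_not.2 sat_top

@[simp] theorem sat_bigConj {l : List PropForm} : sat v (bigConj l) ↔ ∀ γ ∈ l, sat v γ := by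
  induction l with
  | nil => simp [bigConj]
  | cons γ l ih => simp [bigConj, ← ih]

@[simp] theorem sat_bigDisj {l : List PropForm} : sat v (bigDisj l) ↔ ∃ γ ∈ l, sat v γ := by
  induction l with
  | nil => simp [bigDisj]
  | cons γ l ih => simp [bigDisj, ← ih]

theorem sat_congr (h : ∀ j ∈ α.atoms, v j = w j) : sat v α ↔ sat w α := by
  induction α with
  | atom j => simp [h j (Finset.mem_singleton_self j)]
  | neg α ih => exact not_congr (ih h)
  | imp α β ihα ihβ =>
    exact imp_congr (ihα fun j hj => h j (Finset.mem_union_left _ hj))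
      (ihβ fun j hj => h j (Finset.mem_union_right _ hj))

theorem atoms_nonempty (α : PropForm) : α.atoms.Nonempty := by
  induction α with
  | atom j => exact Finset.singleton_nonempty j
  | neg _ ih => exact ih
  | imp _ _ ih => exact ih.mono Finset.subset_union_left

theorem atoms_conj (α β : PropForm) : (conj α β).atoms = α.atoms ∪ β.atoms := rfl

theorem mem_atoms_bigConj {l : List PropForm} {j : ℕ} :
    j ∈ (bigConj l).atoms ↔ j = 0 ∨ ∃ γ ∈ l, j ∈ γ.atoms := by
  induction l with
  | nil => simp [bigConj, top, atoms]
  | cons γ l ih =>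
    change j ∈ γ.atoms ∪ (bigConj l).atoms ↔ _
    rw [Finset.mem_union, ih, List.exists_mem_cons_iff, or_left_comm]

theorem measurableSet_setOf_sat (α : PropForm) : MeasurableSet {v : Val | sat v α} := by
  induction α with
  | atom j => exact measurableSet_eq_fun (measurable_pi_apply j) measurable_const
  | neg _ ih => exact ih.compl
  | imp _ _ ihα ihβ =>
    exact measurableSet_setOfPred.2
      ((measurableSet_setOfPred.1 ihα).imp (measurableSet_setOfPred.1 ihβ))

end PropForm

open PropForm

theorem sat_phi {A U : Finset ℕ} (hU : U ⊆ A) {v : Val} :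
    sat v (phi A U) ↔ restrict v A = U := by
  simp only [restrict_eq_iff hU, eq_valOf_iff, phi, sat_conj, sat_bigConj, List.forall_mem_map,
    Finset.mem_sort, Finset.mem_sdiff, sat_atom, sat_neg]
  exact ⟨fun h j hj => ⟨fun hv => by_contra fun hjU => h.2 j ⟨hj, hjU⟩ hv, h.1 j⟩,
    fun h => ⟨fun j hj => (h j (hU hj)).2 hj, fun j hj hv => hj.2 ((h j hj.1).1 hv)⟩⟩

-- The atom `0` comes from the empty conjunctions `⊤ = (B_0 → B_0)` inside `φ_A^U`.
theorem atoms_phi {A U : Finset ℕ} (hU : U ⊆ A) : (phi A U).atoms = insert 0 A := by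
  ext j
  have hj : j ∈ U ∨ j ∈ A \ U ↔ j ∈ A := by
    rw [← Finset.mem_union, Finset.union_sdiff_of_subset hU]
  simp only [phi, atoms_conj, Finset.mem_union, mem_atoms_bigConj, List.mem_map,
    Finset.mem_sort, exists_exists_and_eq_and, atoms, Finset.mem_singleton, exists_eq_right',
    Finset.mem_insert, ← hj]
  tauto

/-- The models of `γ` among the subsets of `A`. -/
def models (A : Finset ℕ) (γ : PropForm) : Finset (Finset ℕ) :=
  A.powerset.filter fun U => sat (valOf U) γ

theorem mem_models {A U : Finset ℕ} {γ : PropForm} :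
    U ∈ models A γ ↔ U ⊆ A ∧ sat (valOf U) γ := by
  simp [models]

theorem restrict_mem_models {A : Finset ℕ} {γ : PropForm} (hγ : γ.atoms ⊆ A) {v : Val} :
    restrict v A ∈ models A γ ↔ sat v γ := by
  rw [mem_models, and_iff_right (restrict_subset v A)]
  exact sat_congr fun j hj => valOf_restrict (hγ hj) v

theorem models_phi {A U : Finset ℕ} (hU : U ⊆ A) : models A (phi A U) = {U} := by
  ext V
  rw [mem_models, sat_phi hU, Finset.mem_singleton]
  constructor
  · rintro ⟨hV, h⟩
    rwa [restrict_valOf hV] at h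
  · rintro rfl
    exact ⟨hU, restrict_valOf hU⟩

section BigB

variable {k : ℕ}

theorem atoms_subset_bigB (α : Fin k → PropForm) (j : Fin k) : (α j).atoms ⊆ BigB α :=
  Finset.le_sup (f := fun j => (α j).atoms) (Finset.mem_univ j)

theorem bigB_subset_iff {α : Fin k → PropForm} {A : Finset ℕ} :
    BigB α ⊆ A ↔ ∀ j, (α j).atoms ⊆ A := by
  simp [BigB]

theorem bigB_nonempty (α : Fin (k + 1) → PropForm) : (BigB α).Nonempty :=
  (atoms_nonempty (α 0)).mono (atoms_subset_bigB α 0)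

theorem bigB_append {n : ℕ} (α : Fin n → PropForm) (β : Fin k → PropForm) :
    BigB (Fin.append α β) = BigB α ∪ BigB β :=
  eq_of_forall_ge_iff fun A => by
    simp [bigB_subset_iff, Finset.union_subset_iff, Fin.forall_fin_add]

end BigB

/-- The formulas `φ_A^U`, `U ⊆ A`, as a family indexed by `Fin` in an arbitrary order, so that they
can be appended to the formulas of an RR axiom. -/
noncomputable def phiFamily (A : Finset ℕ) (i : Fin A.powerset.card) : PropForm :=
  phi A (A.powerset.equivFin.symm i)

theorem exists_phiFamily_eq {A U : Finset ℕ} (hU : U ⊆ A) : ∃ i, phiFamily A i = phi A U :=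
  ⟨A.powerset.equivFin ⟨U, Finset.mem_powerset.2 hU⟩, by simp [phiFamily]⟩

theorem bigB_phiFamily (A : Finset ℕ) : BigB (phiFamily A) = insert 0 A := by
  apply subset_antisymm
  · exact bigB_subset_iff.2 fun i => (atoms_phi (Finset.mem_powerset.1 (Subtype.property _))).subset
  · obtain ⟨i, hi⟩ := exists_phiFamily_eq (Finset.Subset.refl A)
    simpa only [hi, atoms_phi (Finset.Subset.refl A)] using atoms_subset_bigB (phiFamily A) i

theorem exists_isLiteral_sat_iff (j : ℕ) (w : Val) :
    ∃ γ, IsLiteral γ ∧ γ.atoms = {j} ∧ ∀ v, sat v γ ↔ v j = w j := by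
  cases hw : w j with
  | true => exact ⟨atom j, .inl ⟨j, rfl⟩, rfl, fun v => Iff.rfl⟩
  | false => exact ⟨neg (atom j), .inr ⟨j, rfl⟩, rfl, fun v => by simp⟩

theorem exists_isLitConj_sat_iff {A : Finset ℕ} (hA : A.Nonempty) (w : Val) :
    ∃ γ, IsLitConj γ ∧ γ.atoms = A ∧ ∀ v, sat v γ ↔ ∀ j ∈ A, v j = w j := by
  induction hA using Finset.Nonempty.cons_induction with
  | singleton j =>
    obtain ⟨γ, hγ, hatoms, hsat⟩ := exists_isLiteral_sat_iff j w
    exact ⟨γ, .lit hγ, hatoms, by simpa using hsat⟩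
  | cons j A hj _ ih =>
    obtain ⟨γ, hγ, hγatoms, hγsat⟩ := exists_isLiteral_sat_iff j w
    obtain ⟨δ, hδ, hδatoms, hδsat⟩ := ih
    refine ⟨conj γ δ, .conj (.lit hγ) hδ, ?_, fun v => ?_⟩
    · rw [atoms_conj, hγatoms, hδatoms, Finset.cons_eq_insert, Finset.insert_eq]
    · rw [sat_conj, hγsat, hδsat, Finset.forall_mem_cons]

/-- Since all `α j` share the conjunct `d U` of a model `U`, one weight for each `U` determines
every `x_{α j}` in a solution of `Q`. -/
theorem exists_adequateDNF {k : ℕ} (α : Fin k → PropForm) (hα : (BigB α).Nonempty) :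
    ∃ (d : Finset ℕ → PropForm) (m : Fin k → ℕ) (c : (j : Fin k) → Fin (m j) → PropForm),
      AdequateDNF α m c ∧ ∀ (f : PropForm → ℝ) (j : Fin k),
        ∑ ℓ, f (c j ℓ) = ∑ U ∈ models (BigB α) (α j), f (d U) := by
  choose d hlit hatoms hsat using fun U => exists_isLitConj_sat_iff hα (valOf U)
  let U (j : Fin k) (ℓ : Fin (models (BigB α) (α j)).card) :=
    (models (BigB α) (α j)).equivFin.symm ℓ
  have hsatU (j ℓ v) : sat v (d (U j ℓ)) ↔ restrict v (BigB α) = U j ℓ := by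
    rw [hsat, restrict_eq_iff (mem_models.1 (U j ℓ).2).1]
  refine ⟨d, _, fun j ℓ => d (U j ℓ), ⟨fun j ℓ => hatoms _, fun j ℓ => hlit _, ?_, ?_⟩, ?_⟩
  · intro j ℓ ℓ' hne v
    rw [sat_neg, sat_conj, hsatU, hsatU]
    rintro ⟨h, h'⟩
    exact hne ((Equiv.injective _) (Subtype.ext (h.symm.trans h')))
  · intro j v
    have hU : (∃ ℓ, restrict v (BigB α) = U j ℓ) ↔
        restrict v (BigB α) ∈ models (BigB α) (α j) := by
      rw [← (models (BigB α) (α j)).equivFin.symm.surjective.exists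
        (p := fun V => restrict v (BigB α) = V)]
      simp
    simp [List.mem_ofFn, hsatU, hU, restrict_mem_models (atoms_subset_bigB α j)]
  · intro f j
    rw [← Finset.sum_coe_sort (models (BigB α) (α j))]
    exact Equiv.sum_comp (Finset.equivFin _).symm fun V : models (BigB α) (α j) => f (d V)

theorem exists_isProbabilityMeasure_prob_eq_sum_models {A : Finset ℕ} {p : Finset ℕ → ℝ}
    (hp : ∀ U ∈ A.powerset, 0 ≤ p U) (hsum : ∑ U ∈ A.powerset, p U = 1) :
    ∃ μ : Measure Val, IsProbabilityMeasure μ ∧ ∀ γ, Prob μ γ = ∑ U ∈ models A γ, p U := by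
  let μ : Measure Val := ∑ U ∈ A.powerset, ENNReal.ofReal (p U) • Measure.dirac (valOf U)
  refine ⟨μ, ⟨?_⟩, fun γ => ?_⟩
  · simp [μ, ← ENNReal.ofReal_sum_of_nonneg hp, hsum]
  · have hμ : μ {v | sat v γ} = ∑ U ∈ models A γ, ENNReal.ofReal (p U) := by
      simp [μ, models, Finset.sum_filter, Set.indicator_apply]
    have hpγ : ∀ U ∈ models A γ, 0 ≤ p U := fun U hU => hp U (Finset.mem_of_mem_filter U hU)
    rw [Prob, hμ, ← ENNReal.ofReal_sum_of_nonneg hpγ,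
      ENNReal.toReal_ofReal (Finset.sum_nonneg hpγ)]

theorem prob_eq_one_iff (μ : Measure Val) [IsProbabilityMeasure μ] (α : PropForm) :
    Prob μ α = 1 ↔ ∀ᵐ v ∂μ, sat v α := by
  rw [Prob, ENNReal.toReal_eq_one_iff, ← mem_ae_iff_prob_eq_one (measurableSet_setOf_sat α)]
  rfl

theorem sat_patom {μ : Measure Val} {ρ : RVar → ℝ} {b : Bool} {α : PropForm} {t : RTerm} :
    (patom b α t).sat μ ρ ↔ rcmp b (Prob μ α) (t.eval ρ) := by
  cases b <;> rfl

theorem rrSide_of_pplEntails {k : ℕ} {α : Fin (k + 1) → PropForm} {isEq : Fin (k + 1) → Bool}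
    {t : Fin (k + 1) → RTerm} (hphi : ∀ U ⊆ BigB α, ∃ j, α j = phi (BigB α) U)
    (h : PPLentails (Set.range fun j : Fin k =>
        patom (isEq j.castSucc) (α j.castSucc) (t j.castSucc))
      (patom (isEq (Fin.last k)) (α (Fin.last k)) (t (Fin.last k)))) :
    RRside α isEq t := by
  obtain ⟨d, m, c, hc, hsum⟩ := exists_adequateDNF α (bigB_nonempty α)
  refine ⟨m, c, hc, ?_⟩
  rintro ρ ⟨hp, hp1, hα⟩ hprem
  have hαd (j) : ρ (.fm (α j)) = ∑ U ∈ models (BigB α) (α j), ρ (.fm (d U)) :=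
    (hα j).trans (hsum (fun γ => ρ (.fm γ)) j)
  have hd : ∀ U ⊆ BigB α, ρ (.fm (d U)) = ρ (.fm (phi (BigB α) U)) := by
    intro U hU
    obtain ⟨j, hj⟩ := hphi U hU
    rw [← hj, hαd, hj, models_phi hU, Finset.sum_singleton]
  obtain ⟨μ, hμ, hprob⟩ :=
    exists_isProbabilityMeasure_prob_eq_sum_models (fun U hU => (hp U hU).1) hp1
  have hμα (j) : Prob μ (α j) = ρ (.fm (α j)) := by
    rw [hprob, hαd]
    exact Finset.sum_congr rfl fun U hU => (hd U (mem_models.1 hU).1).symm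
  rw [← hμα, ← sat_patom]
  refine h μ hμ ρ (Set.forall_mem_range.2 fun j => ?_)
  rw [sat_patom, hμα]
  exact hprem j

namespace PPLderiv

variable {Γ : Set PPLForm} {k : ℕ}

theorem pconj_intro {φ ψ : PPLForm} (hφ : PPLderiv Γ φ) (hψ : PPLderiv Γ ψ) :
    PPLderiv Γ (pconj φ ψ) := by
  have htaut : PPLTaut (.imp φ (.imp ψ (pconj φ ψ))) := by
    intro w
    simp only [pconj, pneg, PPLForm.evalAtoms]
    cases φ.evalAtoms w <;> cases ψ.evalAtoms w <;> simp
  exact .mp (.mp (.taut htaut) hφ) hψ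

theorem pBigConj_intro {l : List PPLForm} (hl : l ≠ []) (h : ∀ φ ∈ l, PPLderiv Γ φ) :
    PPLderiv Γ (pBigConj l) := by
  induction l with
  | nil => exact absurd rfl hl
  | cons φ l ih =>
    rw [List.forall_mem_cons] at h
    cases l with
    | nil => exact h.1
    | cons ψ l => exact pconj_intro h.1 (ih (List.cons_ne_nil ψ l) h.2)

theorem of_rrSide {α : Fin (k + 1) → PropForm} {isEq : Fin (k + 1) → Bool}
    {t : Fin (k + 1) → RTerm} (hside : RRside α isEq t)
    (h : ∀ j : Fin k, PPLderiv Γ (patom (isEq j.castSucc) (α j.castSucc) (t j.castSucc))) :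
    PPLderiv Γ (patom (isEq (Fin.last k)) (α (Fin.last k)) (t (Fin.last k))) := by
  cases k with
  | zero => exact .rr α isEq t hside
  | succ k =>
    exact .mp (.rr α isEq t hside) (pBigConj_intro (by simp) (List.forall_mem_ofFn_iff.2 h))

theorem eq_var (γ : PropForm) : PPLderiv Γ (.eq γ (.var (.fm γ))) := by
  obtain ⟨-, m, c, hc, -⟩ := exists_adequateDNF (fun _ : Fin 1 => γ) (bigB_nonempty _)
  exact .rr _ (fun _ => true) (fun _ => .var (.fm γ)) ⟨m, c, hc, fun _ _ _ => rfl⟩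

theorem of_pplEntails {α : Fin (k + 1) → PropForm} {isEq : Fin (k + 1) → Bool}
    {t : Fin (k + 1) → RTerm}
    (hent : PPLentails (Set.range fun j : Fin k =>
        patom (isEq j.castSucc) (α j.castSucc) (t j.castSucc))
      (patom (isEq (Fin.last k)) (α (Fin.last k)) (t (Fin.last k))))
    (h : ∀ j : Fin k, PPLderiv Γ (patom (isEq j.castSucc) (α j.castSucc) (t j.castSucc))) :
    PPLderiv Γ (patom (isEq (Fin.last k)) (α (Fin.last k)) (t (Fin.last k))) := by
  let A := insert 0 (BigB α)
  let α' := Fin.append (n := k + 1) (phiFamily A) α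
  let isEq' := Fin.append (n := k + 1) (fun _ : Fin A.powerset.card => true) isEq
  let t' := Fin.append (n := k + 1) (fun i => .var (.fm (phiFamily A i))) t
  let atom' (j : Fin (A.powerset.card + k + 1)) := patom (isEq' j) (α' j) (t' j)
  have hlast : atom' (Fin.last (A.powerset.card + k)) =
      patom (isEq (Fin.last k)) (α (Fin.last k)) (t (Fin.last k)) := by
    simp [atom', α', isEq', t', ← Fin.natAdd_last]
  have hpremises (P : PPLForm → Prop) :
      (∀ j : Fin (A.powerset.card + k), P (atom' j.castSucc)) ↔
      (∀ i, P (.eq (phiFamily A i) (.var (.fm (phiFamily A i))))) ∧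
        ∀ j : Fin k, P (patom (isEq j.castSucc) (α j.castSucc) (t j.castSucc)) := by
    simp [Fin.forall_fin_add, atom', α', isEq', t', Fin.castSucc_castAdd, Fin.castSucc_natAdd,
      patom]
  have hα' : BigB α' = A := by
    simp [α', bigB_append, bigB_phiFamily, A]
  have hphi : ∀ U ⊆ BigB α', ∃ j, α' j = phi (BigB α') U := by
    intro U hU
    rw [hα'] at hU ⊢
    obtain ⟨i, hi⟩ := exists_phiFamily_eq hU
    exact ⟨Fin.castAdd (k + 1) i, (Fin.append_left _ _ i).trans hi⟩
  rw [← hlast] at hent ⊢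
  refine of_rrSide (rrSide_of_pplEntails hphi ?_) ((hpremises _).2 ⟨fun i => eq_var _, h⟩)
  intro μ hμ ρ hprem
  exact hent μ hμ ρ (Set.forall_mem_range.2 ((hpremises _).1 (Set.forall_mem_range.1 hprem)).2)

theorem star_of_setEntails {α : Fin (k + 1) → PropForm}
    (hent : SetEntails (Set.range fun j : Fin k => α j.castSucc) (α (Fin.last k)))
    (h : ∀ j : Fin k, PPLderiv Γ (star (α j.castSucc))) : PPLderiv Γ (star (α (Fin.last k))) := by
  refine of_pplEntails (isEq := fun _ => true) (t := fun _ => .one) ?_ h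
  intro μ hμ ρ hprem
  have hae : ∀ᵐ v ∂μ, ∀ j : Fin k, sat v (α j.castSucc) :=
    ae_all_iff.2 fun j => (prob_eq_one_iff μ _).1 (hprem _ ⟨j, rfl⟩)
  exact (prob_eq_one_iff μ _).2 (hae.mono fun v hv => hent v (Set.forall_mem_range.2 hv))

end PPLderiv

/-- if `Δ ⊢_c α` then `Δ* ⊢ α*` in the PPL calculus. -/
theorem cpl_deriv_to_ppl (Δ : Set PropForm) (α : PropForm) (h : CPLderiv Δ α) :
    PPLderiv (star '' Δ) (star α) := by
  induction h with
  | hyp hα => exact .hyp ⟨_, hα, rfl⟩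
  | @taut α hα => exact PPLderiv.star_of_setEntails (α := ![α]) (fun v _ => hα v) nofun
  | @mp α β _ _ ihαβ ihα =>
    refine PPLderiv.star_of_setEntails (α := ![imp α β, α, β]) (fun v hv => ?_) ?_
    · exact hv (imp α β) ⟨0, rfl⟩ (hv α ⟨1, rfl⟩)
    · exact Fin.forall_fin_two.2 ⟨ihαβ, ihα⟩
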